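/- Every Krylov set-valued map 𝒞 : X → 2^𝒫 admits a Markov selection, i.e., a measurable selection x ↦ P_x ∈ 𝒞(x) such that for every s > 0, θ_s P_x(·) = ∫ P_{w(s)}(·) P_x(dw). -/

import Mathlib

open MeasureTheory Set
open scoped NNReal

noncomputable section

/-- The space `Ω = C([0,∞) → X)` with the compact-open topology. -/
abbrev IPath (X : Type*) [TopologicalSpace X] : Type _ := C(ℝ≥0, X)

variable {X : Type*} [TopologicalSpace X]

/-- The shift `θ_s : w(·) ↦ w(s + ·)`. -/
def shift (s : ℝ≥0) (w : IPath X) : IPath X :=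
  w.comp ⟨fun t => s + t, by fun_prop⟩

lemma shift_continuous (s : ℝ≥0) : Continuous (shift (X := X) s) :=
  ContinuousMap.continuous_precomp _

/-- The Borel σ-algebra `ℱ` on the path space. -/
instance : MeasurableSpace (IPath X) := borel _
instance : BorelSpace (IPath X) := ⟨rfl⟩

/-- The push-forward `θ_s P` of a probability measure on path space by the shift. -/
def pshift (s : ℝ≥0) (P : ProbabilityMeasure (IPath X)) :
    ProbabilityMeasure (IPath X) :=
  P.map (f := shift s) (shift_continuous s).measurable.aemeasurable

/-- Convexity of a set of probability measures. -/
def ConvexMeasSet {Ω' : Type*} [MeasurableSpace Ω']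
    (C : Set (ProbabilityMeasure Ω')) : Prop :=
  ∀ P ∈ C, ∀ Q ∈ C, ∀ a b : ℝ≥0, a + b = 1 →
    ∀ R : ProbabilityMeasure Ω',
      (R : Measure Ω') = a • (P : Measure Ω') + b • (Q : Measure Ω') → R ∈ C

/-- `Q f = ∫ f dQ` for a bounded continuous `f` on path space. -/
def intBCF (f : BoundedContinuousFunction (IPath X) ℝ)
    (Q : ProbabilityMeasure (IPath X)) : ℝ :=
  ∫ w, f w ∂(Q : Measure (IPath X))

/-- The support function `h_x[f] = sup {P f : P ∈ 𝒞 x}`. -/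
def hSupp (C : X → Set (ProbabilityMeasure (IPath X))) (x : X)
    (f : BoundedContinuousFunction (IPath X) ℝ) : ℝ :=
  sSup (intBCF f '' C x)

/-- The set `K(P, s, 𝒞) = {Q : Q f ≤ ∫ h_{w(s)}[f] dP, ∀ f ∈ C_b(Ω)}`. -/
def Kset (C : X → Set (ProbabilityMeasure (IPath X)))
    (P : ProbabilityMeasure (IPath X)) (s : ℝ≥0) :
    Set (ProbabilityMeasure (IPath X)) :=
  {Q | ∀ f : BoundedContinuousFunction (IPath X) ℝ,
    intBCF f Q ≤ ∫ w, hSupp C (w s) f ∂(P : Measure (IPath X))}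

/-- The functional `ζ_n(P) = ∫₀^∞ e^{-λ_n t} ∫ φ_n(w(t)) P(dw) dt`. -/
def zetaP (lam : ℝ) (phi : X → ℝ) (P : ProbabilityMeasure (IPath X)) : ℝ :=
  ∫ t in Ioi (0 : ℝ), Real.exp (-lam * t) *
    ∫ w, phi (w (Real.toNNReal t)) ∂(P : Measure (IPath X))

/-- The truncated functional `ζ_n^s(P) = ∫₀^s e^{-λ_n t} ∫ φ_n(w(t)) P(dw) dt`. -/
def zetaPtrunc (lam : ℝ) (phi : X → ℝ) (s : ℝ≥0)
    (P : ProbabilityMeasure (IPath X)) : ℝ :=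
  ∫ t in Ioc (0 : ℝ) (s : ℝ), Real.exp (-lam * t) *
    ∫ w, phi (w (Real.toNNReal t)) ∂(P : Measure (IPath X))

/-- The set `Γ[P, x, s](𝒞) = {Q ∈ 𝒞(x) : θ_s Q ∈ K(P, s, 𝒞), ζ_n^s(Q) ≥ ζ_n^s(P) ∀n}`. -/
def GammaSet (C : X → Set (ProbabilityMeasure (IPath X)))
    (lam : ℕ → ℝ) (phi : ℕ → X → ℝ)
    (P : ProbabilityMeasure (IPath X)) (x : X) (s : ℝ≥0) :
    Set (ProbabilityMeasure (IPath X)) :=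
  {Q | Q ∈ C x ∧ pshift s Q ∈ Kset C P s ∧
    ∀ n, zetaPtrunc (lam n) (phi n) s P ≤ zetaPtrunc (lam n) (phi n) s Q}

/-- A **Krylov set-valued map**: nonempty compact convex values (C1), measurable (C2),
`P(Ω_x) = 1` for `P ∈ 𝒞(x)` (C3), `θ_s P ∈ K(P, s, 𝒞)` (KP1), and
`θ_s(Γ[P, x, s](𝒞)) = K(P, s, 𝒞)` (KP2), for all `x`, `P ∈ 𝒞(x)`, `s > 0`. -/
def IsKrylov {X : Type*} [TopologicalSpace X] [MeasurableSpace X]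
    (C : X → Set (ProbabilityMeasure (IPath X)))
    (lam : ℕ → ℝ) (phi : ℕ → X → ℝ) : Prop :=
  (∀ x, (C x).Nonempty ∧ IsCompact (C x) ∧ ConvexMeasSet (C x)) ∧
  (∀ K : Set (ProbabilityMeasure (IPath X)), IsClosed K →
    MeasurableSet {x | (C x ∩ K).Nonempty}) ∧
  (∀ x, ∀ P ∈ C x, (P : Measure (IPath X)) {w : IPath X | w 0 = x} = 1) ∧
  (∀ x, ∀ P ∈ C x, ∀ s : ℝ≥0, 0 < s → pshift s P ∈ Kset C P s) ∧
  (∀ x, ∀ P ∈ C x, ∀ s : ℝ≥0, 0 < s →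
    pshift s '' GammaSet C lam phi P x s = Kset C P s)

/-- The set `V_η[K]` of maximizers of `η` over `K`. -/
def Vmax {α : Type*} (η : α → ℝ) (K : Set α) : Set α :=
  {P ∈ K | ∀ Q ∈ K, η Q ≤ η P}

/-- The properties of the data `(λ_n, φ_n)`: an enumeration of `Λ × Φ` where
`Λ ⊆ (0,∞)` is dense in `(0,∞)` and `Φ` is a countable family of bounded continuous
functions on `X` that strongly separates points and is closed under multiplication. -/
def GoodData {X : Type*} [TopologicalSpace X] (lam : ℕ → ℝ) (phi : ℕ → X → ℝ) : Prop :=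
  (∀ n, 0 < lam n) ∧
  (Ioi (0 : ℝ) ⊆ closure (range lam)) ∧
  (∀ n, Continuous (phi n)) ∧
  (∀ n, ∃ M, ∀ y, |phi n y| ≤ M) ∧
  (∀ x : X, ∀ V ∈ nhds x, ∃ n, ∃ ε > 0, ∀ y ∉ V, ε ≤ |phi n x - phi n y|) ∧
  (∀ m n, ∃ k, phi k = fun y => phi m y * phi n y) ∧
  (∀ m n, ∃ k, lam k = lam m ∧ phi k = phi n)

local notation "BCF" => BoundedContinuousFunction (IPath X) ℝ
local notation "PM" => ProbabilityMeasure (IPath X)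

instance polishPath [PolishSpace X] : PolishSpace (IPath X) := by
  let _ := TopologicalSpace.upgradeIsCompletelyMetrizable X
  exact inferInstance

lemma intBCF_cont (f : BCF) : Continuous (intBCF f) :=
  ProbabilityMeasure.continuous_integral_boundedContinuousFunction f

lemma intBCF_le (f : BCF) (P : PM) : |intBCF f P| ≤ ‖f‖ :=
  BoundedContinuousFunction.norm_integral_le_norm _ f

lemma intBCF_add (f g : BCF) (P : PM) : intBCF (f + g) P = intBCF f P + intBCF g P := by
  unfold intBCF
  rw [← integral_add (f.integrable _) (g.integrable _)]
  rfl

lemma intBCF_smul (c : ℝ) (f : BCF) (P : PM) : intBCF (c • f) P = c * intBCF f P := by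
  unfold intBCF
  rw [← integral_const_mul]
  rfl

lemma intBCF_neg (f : BCF) (P : PM) : intBCF (-f) P = - intBCF f P := by
  unfold intBCF
  rw [← integral_neg]
  rfl

def GoodSV [MeasurableSpace X] (C : X → Set PM) : Prop :=
  (∀ x, (C x).Nonempty ∧ IsCompact (C x)) ∧
  (∀ K : Set PM, IsClosed K → MeasurableSet {x | (C x ∩ K).Nonempty})

lemma hSupp_spec [MeasurableSpace X] {C : X → Set PM} (hC : GoodSV C) (x : X) (f : BCF) :
    (∀ P ∈ C x, intBCF f P ≤ hSupp C x f) ∧ ∃ P ∈ C x, intBCF f P = hSupp C x f := by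
  obtain ⟨P, hP, hm⟩ := (hC.1 x).2.exists_isMaxOn (hC.1 x).1 (intBCF_cont f).continuousOn
  have h : IsGreatest (intBCF f '' C x) (intBCF f P) := by
    refine ⟨⟨P, hP, rfl⟩, ?_⟩
    rintro _ ⟨Q, hQ, rfl⟩
    exact hm hQ
  have h2 : hSupp C x f = intBCF f P := h.csSup_eq
  exact ⟨fun Q hQ => h2 ▸ hm hQ, P, hP, h2.symm⟩

lemma hSupp_bound [MeasurableSpace X] {C : X → Set PM} (hC : GoodSV C) (x : X) (f : BCF) :
    |hSupp C x f| ≤ ‖f‖ := by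
  obtain ⟨P, hP, h⟩ := (hSupp_spec hC x f).2
  rw [← h]
  exact intBCF_le f P

lemma hSupp_meas [MeasurableSpace X] {C : X → Set PM} (hC : GoodSV C) (f : BCF) :
    Measurable (fun x => hSupp C x f) := by
  apply measurable_of_Ici
  intro a
  have := hC.2 (intBCF f ⁻¹' Ici a) (isClosed_Ici.preimage (intBCF_cont f))
  convert this using 1
  ext x
  obtain ⟨h1, P, hP, h2⟩ := hSupp_spec hC x f
  constructor
  · intro h
    exact ⟨P, hP, by simpa [h2] using h⟩
  · rintro ⟨Q, hQ, h⟩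
    exact le_trans h (h1 Q hQ)

lemma hSupp_integrable [MeasurableSpace X] [BorelSpace X] {C : X → Set PM} (hC : GoodSV C)
    (f : BCF) (s : ℝ≥0) (P : PM) :
    Integrable (fun w : IPath X => hSupp C (w s) f) (P : Measure (IPath X)) := by
  refine Integrable.of_bound (C := ‖f‖) ?_ ?_
  · exact ((hSupp_meas hC f).comp
      (continuous_eval_const s).measurable).aestronglyMeasurable
  · exact Filter.Eventually.of_forall fun w => hSupp_bound hC _ f

def Vmap (F : BCF) (C : X → Set PM) (x : X) : Set PM := Vmax (intBCF F) (C x)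

lemma mem_Vmap [MeasurableSpace X] {C : X → Set PM} (hC : GoodSV C) (F : BCF) (x : X) (P : PM) :
    P ∈ Vmap F C x ↔ P ∈ C x ∧ intBCF F P = hSupp C x F := by
  obtain ⟨h1, Q, hQ, h2⟩ := hSupp_spec hC x F
  constructor
  · rintro ⟨h, h'⟩
    exact ⟨h, le_antisymm (h1 P h) (h2 ▸ h' Q hQ)⟩
  · rintro ⟨h, h'⟩
    exact ⟨h, fun R hR => h' ▸ h1 R hR⟩

lemma good_Vmap [PolishSpace X] [MeasurableSpace X] {C : X → Set PM} (hC : GoodSV C) (F : BCF) :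
    GoodSV (Vmap F C) := by
  have hF := intBCF_cont F
  refine ⟨fun x => ⟨?_, ?_⟩, ?_⟩
  · obtain ⟨h1, Q, hQ, h2⟩ := hSupp_spec hC x F
    exact ⟨Q, (mem_Vmap hC F x Q).2 ⟨hQ, h2⟩⟩
  · have : Vmap F C x = C x ∩ (intBCF F ⁻¹' {hSupp C x F}) := by
      ext P; exact mem_Vmap hC F x P
    rw [this]
    exact (hC.1 x).2.inter_right (isClosed_singleton.preimage hF)
  · intro K hK
    have key : {x | (Vmap F C x ∩ K).Nonempty} =
        ⋂ q : ℚ, ({x | (C x ∩ (intBCF F ⁻¹' Ici (q : ℝ))).Nonempty}ᶜ ∪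
          {x | (C x ∩ (K ∩ intBCF F ⁻¹' Ici (q : ℝ))).Nonempty}) := by
      ext x
      obtain ⟨h1, Q, hQ, h2⟩ := hSupp_spec hC x F
      simp only [mem_ofPred_eq, mem_iInter, mem_union, mem_compl_iff]
      constructor
      · rintro ⟨P, hP, hPK⟩ q
        rw [mem_Vmap hC] at hP
        by_cases hq : (q : ℝ) ≤ hSupp C x F
        · right
          exact ⟨P, hP.1, hPK, by simpa [hP.2] using hq⟩
        · left
          rintro ⟨R, hR, hR2⟩
          exact hq (le_trans hR2 (h1 R hR))
      · intro h
        have hlow : ∀ q : ℚ, (q : ℝ) ≤ hSupp C x F →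
            (C x ∩ (K ∩ intBCF F ⁻¹' Ici (q : ℝ))).Nonempty := by
          intro q hq
          rcases h q with h | h
          · exact absurd ⟨Q, hQ, by simpa [h2] using hq⟩ h
          · exact h
        obtain ⟨q0, hq0⟩ := exists_rat_lt (hSupp C x F)
        have hne : (C x ∩ K).Nonempty := by
          obtain ⟨R, hR, hR2, _⟩ := hlow q0 hq0.le
          exact ⟨R, hR, hR2⟩
        obtain ⟨P, hP, hm⟩ := ((hC.1 x).2.inter_right hK).exists_isMaxOn hne hF.continuousOn
        refine ⟨P, (mem_Vmap hC F x P).2 ⟨hP.1, le_antisymm (h1 P hP.1) ?_⟩, hP.2⟩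
        by_contra hlt
        push Not at hlt
        obtain ⟨q, hq1, hq2⟩ := exists_rat_btwn hlt
        obtain ⟨R, hR, hR2, hR3⟩ := hlow q hq2.le
        have a1 : intBCF F R ≤ intBCF F P := hm ⟨hR, hR2⟩
        have a2 : (q : ℝ) ≤ intBCF F R := hR3
        linarith
    rw [key]
    refine MeasurableSet.iInter fun q => ?_
    have hc : IsClosed (intBCF F ⁻¹' Ici (q : ℝ)) := isClosed_Ici.preimage hF
    exact (hC.2 _ hc).compl.union (hC.2 _ (hK.inter hc))

def iterV (F : ℕ → BCF) (C : X → Set PM) : ℕ → X → Set PM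
  | 0 => C
  | n + 1 => Vmap (F n) (iterV F C n)

lemma good_iterV [PolishSpace X] [MeasurableSpace X] {C : X → Set PM} (hC : GoodSV C)
    (F : ℕ → BCF) : ∀ n, GoodSV (iterV F C n)
  | 0 => hC
  | n + 1 => good_Vmap (good_iterV hC F n) (F n)

lemma iterV_succ_subset (F : ℕ → BCF) (C : X → Set PM) (n : ℕ) (x : X) :
    iterV F C (n + 1) x ⊆ iterV F C n x := fun _ h => h.1

def limV (F : ℕ → BCF) (C : X → Set PM) (x : X) : Set PM := ⋂ n, iterV F C n x

lemma limV_inter [PolishSpace X] [MeasurableSpace X] {C : X → Set PM} (hC : GoodSV C)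
    (F : ℕ → BCF) (K : Set PM) (hK : IsClosed K) (x : X)
    (h : ∀ n, (iterV F C n x ∩ K).Nonempty) : (limV F C x ∩ K).Nonempty := by
  have := IsCompact.nonempty_iInter_of_sequence_nonempty_isCompact_isClosed
    (fun n => iterV F C n x ∩ K)
    (fun n => inter_subset_inter_left _ (iterV_succ_subset F C n x)) h
    (((good_iterV hC F 0).1 x).2.inter_right hK)
    (fun n => (((good_iterV hC F n).1 x).2.inter_right hK).isClosed)
  rw [← iInter_inter] at this
  exact this

lemma good_limV [PolishSpace X] [MeasurableSpace X] {C : X → Set PM} (hC : GoodSV C)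
    (F : ℕ → BCF) : GoodSV (limV F C) := by
  refine ⟨fun x => ⟨?_, ?_⟩, ?_⟩
  · have := limV_inter hC F univ isClosed_univ x
      (fun n => by simpa using ((good_iterV hC F n).1 x).1)
    simpa using this
  · exact (hC.1 x).2.of_isClosed_subset
      (isClosed_iInter fun n => ((good_iterV hC F n).1 x).2.isClosed)
      (iInter_subset (fun n => iterV F C n x) 0)
  · intro K hK
    have : {x | (limV F C x ∩ K).Nonempty} = ⋂ n, {x | (iterV F C n x ∩ K).Nonempty} := by
      ext x
      simp only [mem_ofPred_eq, mem_iInter]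
      constructor
      · rintro ⟨P, hP, hPK⟩ n
        exact ⟨P, mem_iInter.1 hP n, hPK⟩
      · exact limV_inter hC F K hK x
    rw [this]
    exact MeasurableSet.iInter fun n => (good_iterV hC F n).2 K hK

lemma limV_eq {F : ℕ → BCF} {C : X → Set PM} {x : X} {P Q : PM} (hP : P ∈ limV F C x)
    (hQ : Q ∈ limV F C x) (n : ℕ) : intBCF (F n) P = intBCF (F n) Q := by
  have h1 := mem_iInter.1 hP (n + 1)
  have h2 := mem_iInter.1 hQ (n + 1)
  exact le_antisymm (h2.2 P h1.1) (h1.2 Q h2.1)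

lemma limV_subset (F : ℕ → BCF) (C : X → Set PM) (x : X) : limV F C x ⊆ C x :=
  iInter_subset (fun n => iterV F C n x) 0

lemma sel_measurable [PolishSpace X] [MeasurableSpace X] (R : X → PM)
    (hR : ∀ K : Set PM, IsClosed K → MeasurableSet (R ⁻¹' K)) :
    Measurable (fun y => (R y : Measure (IPath X))) := by
  refine Measurable.measure_of_isPiSystem_of_isProbabilityMeasure
    (S := {s | IsClosed s}) ?_ isPiSystem_isClosed ?_
  · rw [BorelSpace.measurable_eq (α := IPath X), borel_eq_generateFrom_isClosed]
  · intro B (hB : IsClosed B)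
    refine measurable_of_tendsto_metrizable
      (f := fun n y => ∫⁻ w, hB.apprSeq n w ∂(R y : Measure (IPath X))) ?_ ?_
    · intro n
      refine measurable_of_isClosed fun K hK => ?_
      have hc : Continuous (fun P : PM => ∫⁻ w, hB.apprSeq n w ∂(P : Measure (IPath X))) :=
        ProbabilityMeasure.continuous_lintegral_boundedContinuousFunction _
      exact hR _ (hK.preimage hc)
    · rw [tendsto_pi_nhds]
      intro y
      exact HasOuterApproxClosed.tendsto_lintegral_apprSeq hB _

lemma measure_sep {E : Type*} [TopologicalSpace E] [PolishSpace E] [MeasurableSpace E]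
    [BorelSpace E] (S : Submonoid (BoundedContinuousFunction E ℝ))
    (hS : ∀ x y : E, x ≠ y → ∃ f ∈ S, f x ≠ f y) {P Q : Measure E} [IsFiniteMeasure P]
    [IsFiniteMeasure Q] (h : ∀ f ∈ S, ∫ x, f x ∂P = ∫ x, f x ∂Q) : P = Q := by
  let A : StarSubalgebra ℝ (BoundedContinuousFunction E ℝ) :=
    { Algebra.adjoin ℝ (S : Set (BoundedContinuousFunction E ℝ)) with
      star_mem' := fun {a} ha => by
        have : star a = a := by ext x; simp
        rw [this]; exact ha }
  refine ext_of_forall_mem_subalgebra_integral_eq_of_polish (𝕜 := ℝ) (A := A) ?_ ?_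
  · intro x y hxy
    obtain ⟨f, hf, hne⟩ := hS x y hxy
    refine ⟨f, ⟨f.toContinuousMap, ⟨f, ?_, rfl⟩, rfl⟩, hne⟩
    exact Algebra.subset_adjoin hf
  · intro g hg
    have hg' : g ∈ Subalgebra.toSubmodule
      (Algebra.adjoin ℝ (S : Set (BoundedContinuousFunction E ℝ))) := hg
    rw [Algebra.adjoin_eq_span, Submonoid.closure_eq] at hg'
    clear hg
    induction hg' using Submodule.span_induction with
    | mem f hf => exact h f hf
    | zero => simp
    | add f g _ _ h1 h2 =>
      have e1 := integral_add (f.integrable P) (g.integrable P)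
      have e2 := integral_add (f.integrable Q) (g.integrable Q)
      simp only [BoundedContinuousFunction.coe_add, Pi.add_apply]
      rw [e1, e2, h1, h2]
    | smul c f _ h1 =>
      simp only [BoundedContinuousFunction.coe_smul, smul_eq_mul]
      rw [integral_const_mul, integral_const_mul, h1]

def evB (f : BoundedContinuousFunction X ℝ) (t : ℝ≥0) : BCF :=
  f.compContinuous ⟨fun w => w t, continuous_eval_const t⟩

def monoB (p : ℕ → BoundedContinuousFunction X ℝ) (L : List (ℕ × ℝ≥0)) : BCF :=
  (L.map fun a => evB (p a.1) a.2).prod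

lemma evB_apply (f : BoundedContinuousFunction X ℝ) (t : ℝ≥0) (w : IPath X) :
    evB f t w = f (w t) := rfl

lemma monoB_cons (p : ℕ → BoundedContinuousFunction X ℝ) (a : ℕ × ℝ≥0) (L : List (ℕ × ℝ≥0)) :
    monoB p (a :: L) = evB (p a.1) a.2 * monoB p L := by
  simp [monoB]

lemma monoB_sep [PolishSpace X] (p : ℕ → BoundedContinuousFunction X ℝ)
    (hp : ∀ x y : X, x ≠ y → ∃ n, p n x ≠ p n y) (T : ℕ → ℝ≥0) (hT : DenseRange T) {P Q : PM}
    (h : ∀ L : List (ℕ × ℕ), intBCF (monoB p (L.map fun a => (a.1, T a.2))) P =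
      intBCF (monoB p (L.map fun a => (a.1, T a.2))) Q) : P = Q := by
  let S : Submonoid BCF :=
    { carrier := range fun L : List (ℕ × ℕ) => monoB p (L.map fun a => (a.1, T a.2))
      one_mem' := ⟨[], by simp [monoB]⟩
      mul_mem' := by
        rintro _ _ ⟨L, rfl⟩ ⟨M, rfl⟩
        exact ⟨L ++ M, by simp [monoB]⟩ }
  apply Subtype.ext
  have i1 : IsFiniteMeasure (P : Measure (IPath X)) := inferInstance
  have i2 : IsFiniteMeasure (Q : Measure (IPath X)) := inferInstance
  refine @measure_sep _ _ _ _ _ S ?_ _ _ i1 i2 ?_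
  · intro w v hwv
    have : ∃ k, w (T k) ≠ v (T k) := by
      by_contra hcon
      push Not at hcon
      apply hwv
      ext t
      exact congrFun (hT.equalizer w.continuous v.continuous (funext hcon)) t
    obtain ⟨k, hk⟩ := this
    obtain ⟨n, hn⟩ := hp _ _ hk
    refine ⟨_, ⟨[(n, k)], rfl⟩, ?_⟩
    simpa [monoB, evB_apply] using hn
  · rintro _ ⟨L, rfl⟩
    exact h L

lemma sel_of_subsingleton [MeasurableSpace X] {D : X → Set PM} (hD : GoodSV D)
    (hs : ∀ x, (D x).Subsingleton) : ∃ R : X → PM, (∀ x, D x = {R x}) ∧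
      ∀ K : Set PM, IsClosed K → MeasurableSet (R ⁻¹' K) := by
  choose R hR using fun x => (hD.1 x).1
  have h : ∀ x, D x = {R x} := fun x => (hs x).eq_singleton_of_mem (hR x)
  refine ⟨R, h, fun K hK => ?_⟩
  convert hD.2 K hK using 1
  ext x
  simp [h x]

lemma exists_sel [PolishSpace X] [MeasurableSpace X] (p : ℕ → BoundedContinuousFunction X ℝ)
    (hp : ∀ x y : X, x ≠ y → ∃ n, p n x ≠ p n y) {C : X → Set PM} (hC : GoodSV C) :
    ∃ R : X → PM, (∀ x, R x ∈ C x) ∧ ∀ K : Set PM, IsClosed K → MeasurableSet (R ⁻¹' K) := by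
  obtain ⟨e, he⟩ := exists_surjective_nat (List (ℕ × ℕ))
  let T := TopologicalSpace.denseSeq ℝ≥0
  let F : ℕ → BCF := fun i => monoB p ((e i).map fun a => (a.1, T a.2))
  obtain ⟨R, h1, h2⟩ := sel_of_subsingleton (good_limV hC F) (by
    intro x P hP Q hQ
    refine monoB_sep p hp T (TopologicalSpace.denseRange_denseSeq _) ?_
    intro L
    obtain ⟨i, rfl⟩ := he L
    exact limV_eq hP hQ i)
  refine ⟨R, fun x => limV_subset F C x ?_, h2⟩
  rw [h1 x]; rfl

open ProbabilityTheory in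
lemma exists_mix [PolishSpace X] [MeasurableSpace X] [BorelSpace X] (R : X → PM)
    (hR : ∀ K : Set PM, IsClosed K → MeasurableSet (R ⁻¹' K)) (P : PM) (s : ℝ≥0) :
    ∃ Q : PM, (∀ B, MeasurableSet B → (Q : Measure (IPath X)) B =
        ∫⁻ w, (R (w s) : Measure (IPath X)) B ∂(P : Measure (IPath X))) ∧
      ∀ f, intBCF f Q = ∫ w, intBCF f (R (w s)) ∂(P : Measure (IPath X)) := by
  have hm : Measurable fun w : IPath X => (R (w s) : Measure (IPath X)) :=
    (sel_measurable R hR).comp (continuous_eval_const s).measurable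
  let κ : Kernel (IPath X) (IPath X) := ⟨fun w => (R (w s) : Measure (IPath X)), hm⟩
  have : IsMarkovKernel κ := ⟨fun w => (R (w s)).2⟩
  have hb : (κ ∘ₖ Kernel.const Unit (P : Measure (IPath X))) () =
      (P : Measure (IPath X)).bind κ := rfl
  have hpr : IsProbabilityMeasure ((P : Measure (IPath X)).bind κ) := by
    rw [← hb]; infer_instance
  refine ⟨⟨(P : Measure (IPath X)).bind κ, hpr⟩, ?_, ?_⟩
  · intro B hB
    exact Measure.bind_apply hB hm.aemeasurable
  · intro f
    have := Kernel.integral_comp (κ := Kernel.const Unit (P : Measure (IPath X))) (η := κ)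
      (a := ()) (f := f) (by rw [hb]; exact f.integrable _)
    exact this

lemma Kset_nonempty [PolishSpace X] [MeasurableSpace X] [BorelSpace X]
    (p : ℕ → BoundedContinuousFunction X ℝ)
    (hp : ∀ x y : X, x ≠ y → ∃ n, p n x ≠ p n y) {C : X → Set PM} (hC : GoodSV C)
    (P : PM) (s : ℝ≥0) : (Kset C P s).Nonempty := by
  obtain ⟨R, h1, h2⟩ := exists_sel p hp hC
  obtain ⟨Q, -, hQ⟩ := exists_mix R h2 P s
  refine ⟨Q, fun f => ?_⟩
  rw [hQ f]
  refine integral_mono ?_ (hSupp_integrable hC f s P) fun w => (hSupp_spec hC (w s) f).1 _ (h1 _)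
  refine Integrable.of_bound (C := ‖f‖) ?_ (Filter.Eventually.of_forall fun w => intBCF_le f _)
  have hm : Measurable fun x => intBCF f (R x) :=
    measurable_of_isClosed fun K hK => h2 _ (hK.preimage (intBCF_cont f))
  exact (hm.comp (continuous_eval_const s).measurable).aestronglyMeasurable

lemma hSupp_lim [PolishSpace X] [MeasurableSpace X] {C : X → Set PM} (hC : GoodSV C)
    (f F : BCF) (x : X) :
    Filter.Tendsto (fun n : ℕ => hSupp C x (f + (n : ℝ) • F) - n * hSupp C x F) Filter.atTop
      (nhds (hSupp (Vmap F C) x f)) ∧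
    ∀ n : ℕ, |hSupp C x (f + (n : ℝ) • F) - n * hSupp C x F| ≤ ‖f‖ := by
  have hV := good_Vmap hC F
  obtain ⟨v1, R, hR, v2⟩ := hSupp_spec hV x f
  rw [mem_Vmap hC] at hR
  have hF := (hSupp_spec hC x F).1
  have low : ∀ n : ℕ, hSupp (Vmap F C) x f ≤
      hSupp C x (f + (n : ℝ) • F) - n * hSupp C x F := by
    intro n
    have := (hSupp_spec hC x (f + (n : ℝ) • F)).1 R hR.1
    rw [intBCF_add, intBCF_smul, hR.2] at this
    linarith
  constructor
  · rw [Metric.tendsto_atTop]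
    intro ε hε
    have key : ∃ N : ℕ, ∀ Q ∈ C x,
        intBCF f Q - N * (hSupp C x F - intBCF F Q) < hSupp (Vmap F C) x f + ε := by
      by_contra hcon
      push Not at hcon
      have hcl : ∀ n : ℕ, IsClosed {Q : PM | hSupp (Vmap F C) x f + ε ≤
          intBCF f Q - n * (hSupp C x F - intBCF F Q)} := fun n =>
        isClosed_le continuous_const ((intBCF_cont f).sub
          (continuous_const.mul (continuous_const.sub (intBCF_cont F))))
      have := IsCompact.nonempty_iInter_of_sequence_nonempty_isCompact_isClosed
        (fun n : ℕ => C x ∩ {Q : PM | hSupp (Vmap F C) x f + ε ≤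
          intBCF f Q - n * (hSupp C x F - intBCF F Q)})
        (by
          rintro n Q ⟨hQ, h⟩
          refine ⟨hQ, ?_⟩
          simp only [mem_ofPred_eq] at h ⊢
          have := hF Q hQ
          push_cast at h
          nlinarith)
        (fun n => by
          obtain ⟨Q, hQ, h⟩ := hcon n
          exact ⟨Q, hQ, h⟩)
        ((hC.1 x).2.inter_right (hcl 0))
        (fun n => ((hC.1 x).2.inter_right (hcl n)).isClosed)
      obtain ⟨Q, hQ⟩ := this
      have hQ' : ∀ n : ℕ, Q ∈ C x ∧ hSupp (Vmap F C) x f + ε ≤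
          intBCF f Q - n * (hSupp C x F - intBCF F Q) := fun n => mem_iInter.1 hQ n
      have hQC := (hQ' 0).1
      have heq : intBCF F Q = hSupp C x F := by
        refine le_antisymm (hF Q hQC) ?_
        by_contra hlt
        push Not at hlt
        obtain ⟨n, hn⟩ := exists_nat_gt
          ((intBCF f Q - hSupp (Vmap F C) x f - ε) / (hSupp C x F - intBCF F Q))
        rw [div_lt_iff₀ (by linarith)] at hn
        have := (hQ' n).2
        linarith
      have := v1 Q ((mem_Vmap hC F x Q).2 ⟨hQC, heq⟩)
      have := (hQ' 0).2
      rw [heq] at this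
      linarith
    obtain ⟨N, hN⟩ := key
    refine ⟨N, fun n hn => ?_⟩
    obtain ⟨Q, hQ, h⟩ := (hSupp_spec hC x (f + (n : ℝ) • F)).2
    rw [intBCF_add, intBCF_smul] at h
    have h1 := hN Q hQ
    have h2 := hF Q hQ
    have h3 : (N : ℝ) ≤ n := by exact_mod_cast hn
    have h4 := low n
    rw [Real.dist_eq, abs_lt]
    constructor <;> nlinarith
  · intro n
    obtain ⟨Q, hQ, h⟩ := (hSupp_spec hC x (f + (n : ℝ) • F)).2
    rw [intBCF_add, intBCF_smul] at h
    have h1 := abs_le.1 (intBCF_le f Q)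
    have h2 := abs_le.1 (hSupp_bound hV x f)
    have h3 := mul_le_mul_of_nonneg_left (hF Q hQ) (Nat.cast_nonneg (α := ℝ) n)
    have h4 := low n
    rw [abs_le]
    constructor <;> linarith

lemma hSupp_Vmap_neg [PolishSpace X] [MeasurableSpace X] {C : X → Set PM} (hC : GoodSV C)
    (F : BCF) (x : X) : hSupp (Vmap F C) x (-F) = - hSupp C x F := by
  obtain ⟨-, P, hP, h⟩ := hSupp_spec (good_Vmap hC F) x (-F)
  rw [mem_Vmap hC] at hP
  rw [← h, intBCF_neg, hP.2]

lemma hSupp_mono [MeasurableSpace X] {C D : X → Set PM} (hC : GoodSV C) (hD : GoodSV D) (x : X)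
    (h : D x ⊆ C x) (f : BCF) : hSupp D x f ≤ hSupp C x f := by
  obtain ⟨-, P, hP, e⟩ := hSupp_spec hD x f
  rw [← e]
  exact (hSupp_spec hC x f).1 P (h hP)

lemma Kset_mono [MeasurableSpace X] [BorelSpace X] {C D : X → Set PM} (hC : GoodSV C)
    (hD : GoodSV D) (h : ∀ x, D x ⊆ C x) (P : PM) (s : ℝ≥0) : Kset D P s ⊆ Kset C P s := by
  intro Q hQ f
  refine le_trans (hQ f) (integral_mono (hSupp_integrable hD f s P) (hSupp_integrable hC f s P) ?_)
  exact fun w => hSupp_mono hC hD _ (h _) f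

lemma Vmax_Kset [PolishSpace X] [MeasurableSpace X] [BorelSpace X]
    (p : ℕ → BoundedContinuousFunction X ℝ)
    (hp : ∀ x y : X, x ≠ y → ∃ n, p n x ≠ p n y) {C : X → Set PM} (hC : GoodSV C) (F : BCF)
    (P : PM) (s : ℝ≥0) : Vmax (intBCF F) (Kset C P s) = Kset (Vmap F C) P s := by
  have hV := good_Vmap hC F
  have sub := Kset_mono hC hV (fun x Q hQ => hQ.1) P s
  have ge : ∀ Q ∈ Kset (Vmap F C) P s,
      ∫ w, hSupp C (w s) F ∂(P : Measure (IPath X)) ≤ intBCF F Q := by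
    intro Q hQ
    have := hQ (-F)
    simp only [hSupp_Vmap_neg hC, intBCF_neg, integral_neg] at this
    linarith
  apply Subset.antisymm
  · rintro Q ⟨hQ, hmax⟩ f
    obtain ⟨Q', hQ'⟩ := Kset_nonempty p hp hV P s
    have hFQ : intBCF F Q = ∫ w, hSupp C (w s) F ∂(P : Measure (IPath X)) :=
      le_antisymm (hQ F) (le_trans (ge Q' hQ') (hmax Q' (sub hQ')))
    have lim := tendsto_integral_of_dominated_convergence (μ := (P : Measure (IPath X)))
      (F := fun (n : ℕ) (w : IPath X) =>
        hSupp C (w s) (f + (n : ℝ) • F) - n * hSupp C (w s) F)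
      (f := fun w => hSupp (Vmap F C) (w s) f) (fun _ => ‖f‖)
      (fun n => ((hSupp_integrable hC _ s P).sub
        ((hSupp_integrable hC F s P).const_mul _)).aestronglyMeasurable)
      (integrable_const _)
      (fun n => Filter.Eventually.of_forall fun w => (hSupp_lim hC f F (w s)).2 n)
      (Filter.Eventually.of_forall fun w => (hSupp_lim hC f F (w s)).1)
    refine ge_of_tendsto' lim fun n => ?_
    rw [integral_sub (hSupp_integrable hC _ s P) ((hSupp_integrable hC F s P).const_mul _),
      integral_const_mul, ← hFQ]
    have := hQ (f + (n : ℝ) • F)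
    rw [intBCF_add, intBCF_smul] at this
    linarith
  · intro Q hQ
    exact ⟨sub hQ, fun Q' hQ' => le_trans (hQ' F) (ge Q hQ)⟩

lemma exp_mul_integrable {g : ℝ → ℝ} (hg : Continuous g) {M : ℝ} (hM : ∀ t, |g t| ≤ M)
    {l : ℝ} (hl : 0 < l) :
    Integrable (fun t => Real.exp (-l * t) * g t) (volume.restrict (Ioi 0)) := by
  have h := (exp_neg_integrableOn_Ioi 0 hl)
  refine Integrable.mono' (h.integrable.mul_const M) ?_ ?_
  · exact (by fun_prop : Continuous fun t => Real.exp (-l * t) * g t).aestronglyMeasurable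
  · refine Filter.Eventually.of_forall fun t => ?_
    rw [norm_mul, Real.norm_eq_abs, Real.abs_exp]
    exact mul_le_mul_of_nonneg_left (hM t) (Real.exp_pos _).le

lemma laplace_all {g : ℝ → ℝ} (hg : Continuous g) {M : ℝ} (hM : ∀ t, |g t| ≤ M)
    (lam : ℕ → ℝ) (hd : Ioi (0 : ℝ) ⊆ closure (range lam))
    (h : ∀ n, ∫ t in Ioi (0 : ℝ), Real.exp (-lam n * t) * g t = 0) (l : ℝ) (hl : 0 < l) :
    ∫ t in Ioi (0 : ℝ), Real.exp (-l * t) * g t = 0 := by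
  have hc : ContinuousAt (fun l => ∫ t in Ioi (0 : ℝ), Real.exp (-l * t) * g t) l := by
    refine continuousAt_of_dominated (bound := fun t => Real.exp (-(l / 2) * t) * M) ?_ ?_ ?_ ?_
    · refine Filter.Eventually.of_forall fun l' => ?_
      exact (by fun_prop : Continuous fun t => Real.exp (-l' * t) * g t).aestronglyMeasurable
    · filter_upwards [lt_mem_nhds (show l / 2 < l by linarith)] with l' hl'
      filter_upwards [ae_restrict_mem measurableSet_Ioi] with t ht
      have ht' : (0 : ℝ) < t := ht
      rw [norm_mul, Real.norm_eq_abs, Real.abs_exp]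
      refine mul_le_mul (Real.exp_le_exp.2 ?_) (hM t) (abs_nonneg _) (Real.exp_pos _).le
      nlinarith
    · exact (exp_neg_integrableOn_Ioi 0 (half_pos hl)).integrable.mul_const M
    · refine Filter.Eventually.of_forall fun t => ?_
      exact (by fun_prop : Continuous fun l => Real.exp (-l * t) * g t).continuousAt
  obtain ⟨u, hu, hul⟩ := mem_closure_iff_seq_limit.1 (hd hl)
  have h1 := hc.tendsto.comp hul
  refine tendsto_nhds_unique h1 ?_
  refine tendsto_const_nhds.congr fun k => ?_
  obtain ⟨n, hn⟩ := hu k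
  simp only [Function.comp]
  rw [← hn, h n]

def expB : BoundedContinuousFunction ℝ≥0 ℝ :=
  BoundedContinuousFunction.ofNormedAddCommGroup (fun t : ℝ≥0 => Real.exp (-(t : ℝ)))
    (by fun_prop) 1 (fun t => by
      rw [Real.norm_eq_abs, Real.abs_exp]
      exact Real.exp_le_one_iff.2 (by simp))

lemma dens_integral (d : ℝ → ℝ) (hd : Continuous d) (hd0 : ∀ t, 0 ≤ d t)
    (f : BoundedContinuousFunction ℝ≥0 ℝ) :
    ∫ x, f x ∂(((volume.restrict (Ioi (0 : ℝ))).withDensity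
      (fun t => ((d t).toNNReal : ENNReal))).map Real.toNNReal) =
    ∫ t in Ioi (0 : ℝ), d t * f t.toNNReal := by
  rw [integral_map (by fun_prop) f.continuous.aestronglyMeasurable,
    integral_withDensity_eq_integral_smul (by fun_prop)]
  refine integral_congr_ae (Filter.Eventually.of_forall fun t => ?_)
  simp [NNReal.smul_def, hd0 t]

lemma dens_finite (d : ℝ → ℝ)
    (hi : Integrable d (volume.restrict (Ioi 0))) :
    IsFiniteMeasure (((volume.restrict (Ioi (0 : ℝ))).withDensity
      (fun t => ((d t).toNNReal : ENNReal))).map Real.toNNReal) := by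
  have : IsFiniteMeasure ((volume.restrict (Ioi (0 : ℝ))).withDensity
      (fun t => ((d t).toNNReal : ENNReal))) := by
    apply isFiniteMeasure_withDensity
    have := hi.lintegral_lt_top
    exact this.ne
  infer_instance

lemma laplace_zero {g : ℝ → ℝ} (hg : Continuous g) {M : ℝ} (hM : ∀ t, |g t| ≤ M)
    (lam : ℕ → ℝ) (hd : Ioi (0 : ℝ) ⊆ closure (range lam))
    (h : ∀ n, ∫ t in Ioi (0 : ℝ), Real.exp (-lam n * t) * g t = 0) (t : ℝ) (ht : 0 < t) :
    g t = 0 := by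
  have hall := laplace_all hg hM lam hd h
  have hM0 : 0 ≤ M := (abs_nonneg _).trans (hM 0)
  let d1 : ℝ → ℝ := fun t => Real.exp (-1 * t) * (g t + M)
  let d2 : ℝ → ℝ := fun t => Real.exp (-1 * t) * M
  have c1 : Continuous d1 := by fun_prop
  have c2 : Continuous d2 := by fun_prop
  have p1 : ∀ t, 0 ≤ d1 t := fun t =>
    mul_nonneg (Real.exp_pos _).le (by linarith [(abs_le.1 (hM t)).1])
  have p2 : ∀ t, 0 ≤ d2 t := fun t => mul_nonneg (Real.exp_pos _).le hM0
  have i1 : Integrable d1 (volume.restrict (Ioi 0)) :=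
    exp_mul_integrable (g := fun t => g t + M) (M := M + M) (by fun_prop)
      (fun t => (abs_add_le _ _).trans (by
        rw [abs_of_nonneg hM0]; linarith [hM t])) one_pos
  have i2 : Integrable d2 (volume.restrict (Ioi 0)) :=
    exp_mul_integrable (g := fun _ => M) (M := M) (by fun_prop)
      (fun t => by rw [abs_of_nonneg hM0]) one_pos
  have f1 := dens_finite d1 i1
  have f2 := dens_finite d2 i2
  have meq := @measure_sep ℝ≥0 _ _ _ _ (Submonoid.powers expB) (by
    intro x y hxy
    refine ⟨expB, Submonoid.mem_powers _, fun h => hxy ?_⟩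
    have : Real.exp (-(x : ℝ)) = Real.exp (-(y : ℝ)) := h
    have := Real.exp_injective this
    exact NNReal.coe_injective (by linarith)) _ _ f1 f2 (by
    rintro _ ⟨k, rfl⟩
    rw [dens_integral d1 c1 p1, dens_integral d2 c2 p2]
    have hk : (0 : ℝ) < k + 1 := by positivity
    have e := hall (k + 1) hk
    have j1 := exp_mul_integrable hg hM hk
    have j2 := exp_mul_integrable (g := fun _ => M) (M := M) (by fun_prop)
      (fun t => by rw [abs_of_nonneg hM0]) hk
    have key : ∫ t in Ioi (0 : ℝ), d1 t * (expB ^ k) t.toNNReal =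
      ∫ t in Ioi (0 : ℝ), (Real.exp (-(k + 1) * t) * g t + Real.exp (-(k + 1) * t) * M) := by
      refine setIntegral_congr_fun measurableSet_Ioi fun t ht => ?_
      have ht' : (0 : ℝ) < t := ht
      have : (expB ^ k) t.toNNReal = Real.exp (-(k * t)) := by
        simp [expB, ht'.le, ← Real.exp_nat_mul]
      simp only [d1, this]
      have e2 : Real.exp (-(k + 1) * t) = Real.exp (-1 * t) * Real.exp (-(k * t)) := by
        rw [← Real.exp_add]; ring_nf
      rw [e2]; ring
    have key2 : ∫ t in Ioi (0 : ℝ), d2 t * (expB ^ k) t.toNNReal =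
      ∫ t in Ioi (0 : ℝ), Real.exp (-(k + 1) * t) * M := by
      refine setIntegral_congr_fun measurableSet_Ioi fun t ht => ?_
      have ht' : (0 : ℝ) < t := ht
      have : (expB ^ k) t.toNNReal = Real.exp (-(k * t)) := by
        simp [expB, ht'.le, ← Real.exp_nat_mul]
      simp only [d2, this]
      have e2 : Real.exp (-(k + 1) * t) = Real.exp (-1 * t) * Real.exp (-(k * t)) := by
        rw [← Real.exp_add]; ring_nf
      rw [e2]; ring
    simp only [] at *
    rw [key, key2, integral_add j1 j2, e, zero_add])
  let gB : BoundedContinuousFunction ℝ≥0 ℝ :=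
    BoundedContinuousFunction.ofNormedAddCommGroup (fun t : ℝ≥0 => g t) (by fun_prop) M
      (fun t => hM t)
  have e1 := dens_integral d1 c1 p1 gB
  rw [meq, dens_integral d2 c2 p2 gB] at e1
  have hgg : ∫ t in Ioi (0 : ℝ), Real.exp (-1 * t) * (g t * g t) = 0 := by
    have j2 : Integrable (fun t => d2 t * gB t.toNNReal) (volume.restrict (Ioi 0)) := by
      have := exp_mul_integrable (g := fun t => M * g t.toNNReal) (M := M * M) (by fun_prop)
        (fun t => by rw [abs_mul, abs_of_nonneg hM0]; exact mul_le_mul_of_nonneg_left (hM _) hM0)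
        one_pos
      refine this.congr (Filter.Eventually.of_forall fun t => ?_)
      simp only [d2, gB, BoundedContinuousFunction.coe_ofNormedAddCommGroup]
      ring
    have j1 : Integrable (fun t => d1 t * gB t.toNNReal) (volume.restrict (Ioi 0)) := by
      have := exp_mul_integrable (g := fun t => (g t + M) * g t.toNNReal) (M := (M + M) * M)
        (by fun_prop)
        (fun t => by
          rw [abs_mul]
          refine mul_le_mul ((abs_add_le _ _).trans ?_) (hM _) (abs_nonneg _) (by linarith)
          rw [abs_of_nonneg hM0]; linarith [hM t])
        one_pos
      refine this.congr (Filter.Eventually.of_forall fun t => ?_)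
      simp only [d1, gB, BoundedContinuousFunction.coe_ofNormedAddCommGroup]
      ring
    have := integral_sub j1 j2
    rw [e1, sub_self] at this
    refine Eq.trans ?_ this
    refine setIntegral_congr_fun measurableSet_Ioi fun t ht => ?_
    have ht' : (0 : ℝ) < t := ht
    simp only [d1, d2, gB, BoundedContinuousFunction.coe_ofNormedAddCommGroup,
      Real.coe_toNNReal _ ht'.le]
    ring
  have hae : (fun t => Real.exp (-1 * t) * (g t * g t)) =ᵐ[volume.restrict (Ioi 0)] 0 := by
    refine (integral_eq_zero_iff_of_nonneg ?_ ?_).1 hgg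
    · intro t
      exact mul_nonneg (Real.exp_pos _).le (mul_self_nonneg _)
    · refine exp_mul_integrable (g := fun t => g t * g t) (M := M * M) (by fun_prop) ?_ one_pos
      intro t
      rw [abs_mul]
      exact mul_le_mul (hM t) (hM t) (abs_nonneg _) hM0
  have heq := Measure.eqOn_open_of_ae_eq hae (isOpen_Ioi (a := (0 : ℝ)))
    (by fun_prop) (by fun_prop)
  have := heq ht
  simpa [Real.exp_ne_zero] using this

lemma eval_joint : Continuous (fun q : IPath X × ℝ => q.1 q.2.toNNReal) := by
  fun_prop

lemma marg_cont (f : BoundedContinuousFunction X ℝ) (P : PM) :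
    Continuous (fun t : ℝ => ∫ w, f (w t.toNNReal) ∂(P : Measure (IPath X))) := by
  refine continuous_of_dominated (bound := fun _ => ‖f‖) ?_ ?_ (integrable_const _) ?_
  · intro t
    exact (f.continuous.comp (continuous_eval_const _)).aestronglyMeasurable
  · intro t
    exact Filter.Eventually.of_forall fun w => f.norm_coe_le_norm _
  · exact Filter.Eventually.of_forall fun w => by fun_prop

lemma marg_bound (f : BoundedContinuousFunction X ℝ) (P : PM) (t : ℝ) :
    |∫ w, f (w t.toNNReal) ∂(P : Measure (IPath X))| ≤ ‖f‖ :=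
  (intBCF_le (evB f t.toNNReal) P).trans (by
    refine (BoundedContinuousFunction.norm_le (norm_nonneg _)).2 fun w => ?_
    exact f.norm_coe_le_norm _)

lemma exists_zetaB [PolishSpace X] (l : ℝ) (hl : 0 < l) (f : BoundedContinuousFunction X ℝ) :
    ∃ F : BCF, ∀ P : PM, zetaP l f P = intBCF F P := by
  have hi : Integrable (fun t : ℝ => Real.exp (-l * t) * ‖f‖) (volume.restrict (Ioi 0)) :=
    (exp_neg_integrableOn_Ioi 0 hl).integrable.mul_const _
  have hb : ∀ (w : IPath X) (t : ℝ), ‖Real.exp (-l * t) * f (w t.toNNReal)‖ ≤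
      Real.exp (-l * t) * ‖f‖ := by
    intro w t
    rw [norm_mul, Real.norm_eq_abs, Real.abs_exp]
    exact mul_le_mul_of_nonneg_left (f.norm_coe_le_norm _) (Real.exp_pos _).le
  let F : BCF := BoundedContinuousFunction.ofNormedAddCommGroup
    (fun w => ∫ t in Ioi (0 : ℝ), Real.exp (-l * t) * f (w t.toNNReal))
    (by
      refine continuous_of_dominated (bound := fun t => Real.exp (-l * t) * ‖f‖) ?_ ?_ hi ?_
      · intro w
        exact (by fun_prop : Continuous fun t : ℝ =>
          Real.exp (-l * t) * f (w t.toNNReal)).aestronglyMeasurable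
      · intro w
        exact Filter.Eventually.of_forall fun t => hb w t
      · exact Filter.Eventually.of_forall fun t =>
          continuous_const.mul (f.continuous.comp (continuous_eval_const _)))
    (∫ t in Ioi (0 : ℝ), Real.exp (-l * t) * ‖f‖)
    (fun w => norm_integral_le_of_norm_le hi (Filter.Eventually.of_forall fun t => hb w t))
  refine ⟨F, fun P => ?_⟩
  unfold zetaP intBCF
  simp only [F, BoundedContinuousFunction.coe_ofNormedAddCommGroup]
  simp_rw [← integral_const_mul]
  rw [integral_integral_swap]
  have hc : Continuous (Function.uncurry fun (t : ℝ) (w : IPath X) =>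
      Real.exp (-l * t) * f (w t.toNNReal)) := by
    have := eval_joint (X := X)
    unfold Function.uncurry
    refine (by fun_prop : Continuous fun q : ℝ × IPath X => Real.exp (-l * q.1)).mul
      (f.continuous.comp ?_)
    exact this.comp continuous_swap
  have h2 : Integrable (fun q : ℝ × IPath X => (Real.exp (-l * q.1) * ‖f‖) * 1)
      ((volume.restrict (Ioi 0)).prod (P : Measure (IPath X))) :=
    hi.mul_prod (integrable_const 1)
  refine h2.mono' hc.aestronglyMeasurable ?_
  refine Filter.Eventually.of_forall fun q => ?_
  rw [mul_one]
  exact hb q.2 q.1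

lemma zeta_split (l : ℝ) (hl : 0 < l) (f : BoundedContinuousFunction X ℝ) (s : ℝ≥0) (P : PM) :
    zetaP l f P = zetaPtrunc l f s P + Real.exp (-l * s) * zetaP l f (pshift s P) := by
  have hi := exp_mul_integrable (marg_cont f P) (marg_bound f P) hl
  have hi' : IntegrableOn (fun t : ℝ => Real.exp (-l * t) *
    ∫ w, f (w t.toNNReal) ∂(P : Measure (IPath X))) (Ioi 0) := hi
  unfold zetaP zetaPtrunc
  rw [← Ioc_union_Ioi_eq_Ioi (NNReal.coe_nonneg s), setIntegral_union
    (Ioc_disjoint_Ioi le_rfl) measurableSet_Ioi (hi'.mono_set Ioc_subset_Ioi_self)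
    (hi'.mono_set (Ioi_subset_Ioi (NNReal.coe_nonneg s)))]
  congr 1
  have hpre : (fun x : ℝ => x + (s : ℝ)) ⁻¹' Ioi (s : ℝ) = Ioi 0 := by
    ext x; simp
  rw [Ioc_union_Ioi_eq_Ioi (NNReal.coe_nonneg s),
    ← (measurePreserving_add_right volume (s : ℝ)).setIntegral_preimage_emb
    (MeasurableEquiv.addRight (s : ℝ)).measurableEmbedding, hpre, ← integral_const_mul]
  refine setIntegral_congr_fun measurableSet_Ioi fun t ht => ?_
  have ht' : (0 : ℝ) < t := ht
  rw [← mul_assoc, ← Real.exp_add]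
  congr 1
  · ring_nf
  · unfold pshift
    have hm : Continuous fun w : IPath X => f (w t.toNNReal) :=
      f.continuous.comp (continuous_eval_const _)
    rw [ProbabilityMeasure.toMeasure_map, integral_map (shift_continuous s).measurable.aemeasurable
      hm.aestronglyMeasurable]
    refine integral_congr_ae (Filter.Eventually.of_forall fun w => ?_)
    simp only [shift, ContinuousMap.comp_apply, ContinuousMap.coe_mk]
    rw [Real.toNNReal_add ht'.le (NNReal.coe_nonneg s), Real.toNNReal_coe, add_comm]

def KP [MeasurableSpace X] (lam : ℕ → ℝ) (phi : ℕ → X → ℝ) (C : X → Set PM) : Prop :=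
  (∀ x, ∀ P ∈ C x, ∀ s : ℝ≥0, 0 < s → pshift s P ∈ Kset C P s) ∧
  (∀ x, ∀ P ∈ C x, ∀ s : ℝ≥0, 0 < s →
    pshift s '' GammaSet C lam phi P x s = Kset C P s)

lemma KP_step [PolishSpace X] [MeasurableSpace X] [BorelSpace X]
    (p : ℕ → BoundedContinuousFunction X ℝ)
    (hp : ∀ x y : X, x ≠ y → ∃ n, p n x ≠ p n y) (lam : ℕ → ℝ) (hlam : ∀ n, 0 < lam n)
    {C : X → Set PM} (hC : GoodSV C)
    (hKP : KP lam (fun n => p n) C) (m : ℕ) (F : BCF)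
    (hF : ∀ P : PM, zetaP (lam m) (p m) P = intBCF F P) :
    KP lam (fun n => p n) (Vmap F C) := by
  obtain ⟨k1, k2⟩ := hKP
  have split : ∀ s (P : PM), intBCF F P = zetaPtrunc (lam m) (p m) s P +
      Real.exp (-lam m * s) * intBCF F (pshift s P) := by
    intro s P
    rw [← hF, ← hF]
    exact zeta_split _ (hlam m) (p m) s P
  have kp1 : ∀ x, ∀ P ∈ Vmap F C x, ∀ s : ℝ≥0, 0 < s →
      pshift s P ∈ Kset (Vmap F C) P s := by
    intro x P hP s hs
    rw [← Vmax_Kset p hp hC]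
    refine ⟨k1 x P hP.1 s hs, fun Q' hQ' => ?_⟩
    rw [← k2 x P hP.1 s hs] at hQ'
    obtain ⟨Q, ⟨hQ, -, hz⟩, rfl⟩ := hQ'
    have h1 := hP.2 Q hQ
    rw [split s P, split s Q] at h1
    have h2 : zetaPtrunc (lam m) (p m) s P ≤ zetaPtrunc (lam m) (p m) s Q := hz m
    exact le_of_mul_le_mul_left (by linarith) (Real.exp_pos (-lam m * s))
  refine ⟨kp1, fun x P hP s hs => Subset.antisymm ?_ ?_⟩
  · rintro _ ⟨Q, hQ, rfl⟩
    exact hQ.2.1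
  · intro Q' hQ'
    have hmax := hQ'
    rw [← Vmax_Kset p hp hC] at hmax
    have hm := hmax.1
    rw [← k2 x P hP.1 s hs] at hm
    obtain ⟨Q, ⟨hQ, hq2, hz⟩, rfl⟩ := hm
    refine ⟨Q, ⟨⟨hQ, fun R hR => le_trans (hP.2 R hR) ?_⟩, hQ', hz⟩, rfl⟩
    rw [split s P, split s Q]
    have h2 : zetaPtrunc (lam m) (p m) s P ≤ zetaPtrunc (lam m) (p m) s Q := hz m
    have h3 := hmax.2 _ (k1 x P hP.1 s hs)
    exact add_le_add h2 (mul_le_mul_of_nonneg_left h3 (Real.exp_pos _).le)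

lemma hSupp_limV [PolishSpace X] [MeasurableSpace X] {C : X → Set PM} (hC : GoodSV C)
    (F : ℕ → BCF) (f : BCF) (x : X) :
    Filter.Tendsto (fun n => hSupp (iterV F C n) x f) Filter.atTop
      (nhds (hSupp (limV F C) x f)) := by
  have hD := good_limV hC F
  have anti : Antitone fun n => hSupp (iterV F C n) x f := antitone_nat_of_succ_le fun n =>
    hSupp_mono (good_iterV hC F n) (good_iterV hC F (n + 1)) x (iterV_succ_subset F C n x) f
  have low : ∀ n, hSupp (limV F C) x f ≤ hSupp (iterV F C n) x f := fun n =>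
    hSupp_mono (good_iterV hC F n) hD x (iInter_subset _ n) f
  rw [Metric.tendsto_atTop]
  intro ε hε
  have key : ∃ N, hSupp (iterV F C N) x f < hSupp (limV F C) x f + ε := by
    by_contra hcon
    push Not at hcon
    obtain ⟨Q, hQ, h⟩ := limV_inter hC F (intBCF f ⁻¹' Ici (hSupp (limV F C) x f + ε))
      (isClosed_Ici.preimage (intBCF_cont f)) x (fun n => by
        obtain ⟨P, hP, e⟩ := (hSupp_spec (good_iterV hC F n) x f).2
        exact ⟨P, hP, by simpa [e] using hcon n⟩)
    have h1 := (hSupp_spec hD x f).1 Q hQ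
    have h2 : hSupp (limV F C) x f + ε ≤ intBCF f Q := h
    linarith
  obtain ⟨N, hN⟩ := key
  refine ⟨N, fun n hn => ?_⟩
  have h1 := anti hn
  simp only [] at h1
  rw [Real.dist_eq, abs_lt]
  constructor <;> linarith [low n]

lemma KP1_lim [PolishSpace X] [MeasurableSpace X] [BorelSpace X] {C : X → Set PM}
    (hC : GoodSV C) (F : ℕ → BCF)
    (h : ∀ n, ∀ x, ∀ P ∈ iterV F C n x, ∀ s : ℝ≥0, 0 < s → pshift s P ∈ Kset (iterV F C n) P s)
    (x : X) (P : PM) (hP : P ∈ limV F C x) (s : ℝ≥0) (hs : 0 < s) :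
    pshift s P ∈ Kset (limV F C) P s := by
  intro f
  have lim := tendsto_integral_of_dominated_convergence (μ := (P : Measure (IPath X)))
    (F := fun (n : ℕ) (w : IPath X) => hSupp (iterV F C n) (w s) f)
    (f := fun w => hSupp (limV F C) (w s) f) (fun _ => ‖f‖)
    (fun n => (hSupp_integrable (good_iterV hC F n) f s P).aestronglyMeasurable)
    (integrable_const _)
    (fun n => Filter.Eventually.of_forall fun w => hSupp_bound (good_iterV hC F n) (w s) f)
    (Filter.Eventually.of_forall fun w => hSupp_limV hC F f (w s))
  exact ge_of_tendsto' lim fun n => h n x P (mem_iInter.1 hP n) s hs f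

lemma intBCF_pshift (f : BCF) (s : ℝ≥0) (P : PM) :
    intBCF f (pshift s P) = ∫ w, f (shift s w) ∂(P : Measure (IPath X)) := by
  unfold intBCF pshift
  rw [ProbabilityMeasure.toMeasure_map, integral_map (shift_continuous s).measurable.aemeasurable
      f.continuous.aestronglyMeasurable]

lemma KP1_const [MeasurableSpace X] [BorelSpace X] {D : X → Set PM} (hD : GoodSV D)
    {P : PM} {s : ℝ≥0} (h : pshift s P ∈ Kset D P s) (G : BCF)
    (hG : ∀ y, ∀ R ∈ D y, ∀ R' ∈ D y, intBCF G R = intBCF G R') :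
    intBCF G (pshift s P) = ∫ w, hSupp D (w s) G ∂(P : Measure (IPath X)) := by
  have hneg : ∀ y, hSupp D y (-G) = - hSupp D y G := by
    intro y
    obtain ⟨-, R, hR, e⟩ := hSupp_spec hD y G
    obtain ⟨-, R', hR', e'⟩ := hSupp_spec hD y (-G)
    rw [← e, ← e', intBCF_neg, hG y R hR R' hR']
  refine le_antisymm (h G) ?_
  have := h (-G)
  simp only [hneg, intBCF_neg, integral_neg] at this
  linarith

lemma ev0_mul [PolishSpace X] {P : PM} {x : X}
    (h : (P : Measure (IPath X)) {w : IPath X | w 0 = x} = 1)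
    (f : BoundedContinuousFunction X ℝ) (G : BCF) :
    intBCF (evB f 0 * G) P = f x * intBCF G P := by
  have hae : ∀ᵐ w ∂(P : Measure (IPath X)), w 0 = x := by
    have hm : MeasurableSet {w : IPath X | w 0 = x} :=
      (isClosed_singleton.preimage (continuous_eval_const (0 : ℝ≥0))).measurableSet
    exact (prob_compl_eq_zero_iff hm).2 h
  unfold intBCF
  rw [← integral_const_mul]
  refine integral_congr_ae ?_
  filter_upwards [hae] with w hw
  simp [evB_apply, hw]

lemma exists_min_perm (L : List (ℕ × ℝ≥0)) (hL : L ≠ []) :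
    ∃ a L', L.Perm (a :: L') ∧ ∀ b ∈ L', a.2 ≤ b.2 := by
  classical
  obtain ⟨a, ha, hmin⟩ := L.toFinset.exists_min_image (fun b => b.2)
    (List.toFinset_nonempty_iff L |>.2 hL)
  refine ⟨a, L.erase a, List.perm_cons_erase (List.mem_toFinset.1 ha), fun b hb => ?_⟩
  exact hmin b (List.mem_toFinset.2 (List.mem_of_mem_erase hb))

lemma monoB_shift (p : ℕ → BoundedContinuousFunction X ℝ) (d : ℝ≥0) (L : List (ℕ × ℝ≥0))
    (h : ∀ b ∈ L, d ≤ b.2) (w : IPath X) :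
    monoB p L w = monoB p (L.map fun b => (b.1, b.2 - d)) (shift d w) := by
  induction L with
  | nil => simp [monoB]
  | cons a L ih =>
    rw [List.map_cons, monoB_cons, monoB_cons, BoundedContinuousFunction.mul_apply,
      BoundedContinuousFunction.mul_apply, ih (fun b hb => h b (List.mem_cons_of_mem _ hb))]
    congr 1
    have : d + (a.2 - d) = a.2 := add_tsub_cancel_of_le (h a List.mem_cons_self)
    simp [evB_apply, shift, this]

lemma mono_unique [PolishSpace X] [MeasurableSpace X] [BorelSpace X]
    (p : ℕ → BoundedContinuousFunction X ℝ) {D : X → Set PM} (hD : GoodSV D)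
    (h3 : ∀ x, ∀ P ∈ D x, (P : Measure (IPath X)) {w : IPath X | w 0 = x} = 1)
    (k1 : ∀ x, ∀ P ∈ D x, ∀ s : ℝ≥0, 0 < s → pshift s P ∈ Kset D P s)
    (hm : ∀ x, ∀ P ∈ D x, ∀ Q ∈ D x, ∀ t : ℝ≥0, 0 < t →
      (P : Measure (IPath X)).map (fun w => w t) = (Q : Measure (IPath X)).map (fun w => w t))
    (k : ℕ) : ∀ L : List (ℕ × ℝ≥0), L.length = k → ∀ x, ∀ P ∈ D x, ∀ Q ∈ D x,
      intBCF (monoB p L) P = intBCF (monoB p L) Q := by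
  induction k with
  | zero =>
    intro L hL x P _ Q _
    rw [List.length_eq_zero_iff] at hL
    subst hL
    simp [monoB, intBCF]
  | succ k ih =>
    intro L hL x P hP Q hQ
    obtain ⟨⟨n, d⟩, L', hperm, hmin⟩ := exists_min_perm L (by rintro rfl; simp at hL)
    have hlen : L'.length = k := by
      have := hperm.length_eq
      simp at this; omega
    have e : monoB p L = evB (p n) d * monoB p L' := by
      rw [← monoB_cons p (n, d) L']
      exact (hperm.map _).prod_eq
    rw [e]
    rcases eq_or_lt_of_le (zero_le (a := d)) with hd | hd
    · subst hd
      rw [ev0_mul (h3 x P hP), ev0_mul (h3 x Q hQ), ih L' hlen x P hP Q hQ]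
    · let L2 := L'.map fun b => (b.1, b.2 - d)
      have hlen2 : L2.length = k := by simp [L2, hlen]
      let G : BCF := evB (p n) 0 * monoB p L2
      have hG : ∀ y, ∀ R ∈ D y, ∀ R' ∈ D y, intBCF G R = intBCF G R' := by
        intro y R hR R' hR'
        rw [ev0_mul (h3 y R hR), ev0_mul (h3 y R' hR'), ih L2 hlen2 y R hR R' hR']
      have eG : ∀ R : PM, intBCF (evB (p n) d * monoB p L') R = intBCF G (pshift d R) := by
        intro R
        rw [intBCF_pshift]
        refine integral_congr_ae (Filter.Eventually.of_forall fun w => ?_)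
        simp only [G, BoundedContinuousFunction.mul_apply, L2]
        rw [monoB_shift p d L' hmin w]
        simp [evB_apply, shift]
      have eI : ∀ R : PM, ∫ w, hSupp D (w d) G ∂(R : Measure (IPath X)) =
          ∫ y, hSupp D y G ∂((R : Measure (IPath X)).map (fun w => w d)) := by
        intro R
        rw [integral_map (continuous_eval_const d).measurable.aemeasurable
          (hSupp_meas hD G).aestronglyMeasurable]
      rw [eG, eG, KP1_const hD (k1 x P hP d hd) G hG, KP1_const hD (k1 x Q hQ d hd) G hG,
        eI, eI, hm x P hP Q hQ d hd]

lemma marg_eq [PolishSpace X] [MeasurableSpace X] [BorelSpace X]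
    (p : ℕ → BoundedContinuousFunction X ℝ)
    (hp : ∀ x y : X, x ≠ y → ∃ n, p n x ≠ p n y) (lam : ℕ → ℝ) (hlam : ∀ n, 0 < lam n)
    (hd : Ioi (0 : ℝ) ⊆ closure (range lam))
    (hmul : ∀ m n, ∃ k, p k = p m * p n)
    (hprod : ∀ m n, ∃ k, lam k = lam m ∧ p k = p n) {P Q : PM}
    (h : ∀ n, zetaP (lam n) (p n) P = zetaP (lam n) (p n) Q) (t : ℝ≥0) (ht : 0 < t) :
    (P : Measure (IPath X)).map (fun w => w t) = (Q : Measure (IPath X)).map (fun w => w t) := by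
  have hev : Measurable fun w : IPath X => w t := (continuous_eval_const t).measurable
  have f1 : IsProbabilityMeasure ((P : Measure (IPath X)).map (fun w => w t)) :=
    Measure.isProbabilityMeasure_map hev.aemeasurable
  have f2 : IsProbabilityMeasure ((Q : Measure (IPath X)).map (fun w => w t)) :=
    Measure.isProbabilityMeasure_map hev.aemeasurable
  let S : Submonoid (BoundedContinuousFunction X ℝ) :=
    { carrier := {f | f = 1 ∨ ∃ n, f = p n}
      one_mem' := Or.inl rfl
      mul_mem' := by
        rintro a b (rfl | ⟨m, rfl⟩) (rfl | ⟨n, rfl⟩)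
        · left; simp
        · right; exact ⟨n, by simp⟩
        · right; exact ⟨m, by simp⟩
        · right
          obtain ⟨k, hk⟩ := hmul m n
          exact ⟨k, hk.symm⟩ }
  refine measure_sep S ?_ ?_
  · intro x y hxy
    obtain ⟨n, hn⟩ := hp x y hxy
    exact ⟨p n, Or.inr ⟨n, rfl⟩, hn⟩
  · rintro _ (rfl | ⟨n, rfl⟩)
    · simp
    · rw [integral_map hev.aemeasurable (p n).continuous.aestronglyMeasurable,
        integral_map hev.aemeasurable (p n).continuous.aestronglyMeasurable]
      have key := laplace_zero ((marg_cont (p n) P).sub (marg_cont (p n) Q)) (M := ‖p n‖ + ‖p n‖)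
        (fun t => (abs_sub _ _).trans (add_le_add (marg_bound _ _ _) (marg_bound _ _ _)))
        lam hd (fun m => by
          obtain ⟨k, hk1, hk2⟩ := hprod m n
          have hk := h k
          rw [hk1, hk2] at hk
          unfold zetaP at hk
          rw [← sub_eq_zero, ← integral_sub
            (exp_mul_integrable (marg_cont (p n) P) (marg_bound _ _) (hlam m))
            (exp_mul_integrable (marg_cont (p n) Q) (marg_bound _ _) (hlam m))] at hk
          refine Eq.trans ?_ hk
          refine integral_congr_ae (Filter.Eventually.of_forall fun t => ?_)
          simp only [Pi.sub_apply]
          ring) (t : ℝ) (by exact_mod_cast ht)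
      simp only [Pi.sub_apply, Real.toNNReal_coe] at key
      exact sub_eq_zero.1 key

/-- **Abstract Markov selection theorem:** every Krylov set-valued map admits a Markov
selection, i.e., a measurable selection `x ↦ P_x ∈ 𝒞(x)` with
`θ_s P_x(·) = ∫ P_{w(s)}(·) P_x(dw)` for every `s > 0`. -/
theorem krylov_markov_selection
    {X : Type*} [TopologicalSpace X] [PolishSpace X] [MeasurableSpace X] [BorelSpace X]
    (lam : ℕ → ℝ) (phi : ℕ → X → ℝ) (hdata : GoodData lam phi)
    (C : X → Set (ProbabilityMeasure (IPath X)))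
    (hK : IsKrylov C lam phi) :
    ∃ sel : X → ProbabilityMeasure (IPath X),
      (∀ U : Set (ProbabilityMeasure (IPath X)), IsOpen U →
        MeasurableSet (sel ⁻¹' U)) ∧
      (∀ x, sel x ∈ C x) ∧
      ∀ x, ∀ s : ℝ≥0, 0 < s → ∀ B : Set (IPath X), MeasurableSet B →
        (pshift s (sel x) : Measure (IPath X)) B =
          ∫⁻ w, (sel (w s) : Measure (IPath X)) B ∂(sel x : Measure (IPath X)) := by
  obtain ⟨hlam, hdense, hcont, hbd, hsep, hmul, hprod⟩ := hdata
  obtain ⟨c1, c2, c3, k1, k2⟩ := hK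
  choose M hM using hbd
  let p : ℕ → BoundedContinuousFunction X ℝ := fun n =>
    BoundedContinuousFunction.ofNormedAddCommGroup (phi n) (hcont n) (M n) (hM n)
  have hpphi : (fun n => (p n : X → ℝ)) = phi := rfl
  have hp : ∀ x y : X, x ≠ y → ∃ n, p n x ≠ p n y := by
    intro x y hxy
    obtain ⟨n, ε, hε, hn⟩ := hsep x {y}ᶜ (isOpen_compl_singleton.mem_nhds hxy)
    refine ⟨n, fun he => ?_⟩
    have h1 := hn y (by simp)
    have h2 : phi n x = phi n y := he
    rw [h2, sub_self, abs_zero] at h1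
    linarith
  have hmul' : ∀ m n, ∃ k, p k = p m * p n := by
    intro m n
    obtain ⟨k, hk⟩ := hmul m n
    refine ⟨k, ?_⟩
    ext y
    exact congrFun hk y
  have hprod' : ∀ m n, ∃ k, lam k = lam m ∧ p k = p n := by
    intro m n
    obtain ⟨k, hk1, hk2⟩ := hprod m n
    refine ⟨k, hk1, ?_⟩
    ext y
    exact congrFun hk2 y
  have hC : GoodSV C := ⟨fun x => ⟨(c1 x).1, (c1 x).2.1⟩, c2⟩
  choose F hF using fun n => exists_zetaB (lam n) (hlam n) (p n)
  have hKP : ∀ n, KP lam (fun n => (p n : X → ℝ)) (iterV F C n) := by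
    intro n
    induction n with
    | zero => exact ⟨k1, k2⟩
    | succ n ih => exact KP_step p hp lam hlam (good_iterV hC F n) ih n (F n) (hF n)
  have hD := good_limV hC F
  have d1 := KP1_lim hC F (fun n => (hKP n).1)
  have d3 : ∀ x, ∀ P ∈ limV F C x, (P : Measure (IPath X)) {w : IPath X | w 0 = x} = 1 :=
    fun x P hP => c3 x P (limV_subset F C x hP)
  have huniq := mono_unique p hD d3 d1 (fun x P hP Q hQ t ht =>
    marg_eq p hp lam hlam hdense hmul' hprod' (fun n => by
      rw [hF, hF]; exact limV_eq hP hQ n) t ht)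
  obtain ⟨R, hR, hRm⟩ := sel_of_subsingleton hD (by
    intro x P hP Q hQ
    refine monoB_sep p hp (TopologicalSpace.denseSeq ℝ≥0)
      (TopologicalSpace.denseRange_denseSeq _) fun L => ?_
    exact huniq _ _ rfl x P hP Q hQ)
  have hRD : ∀ x, R x ∈ limV F C x := fun x => by rw [hR x]; rfl
  refine ⟨R, fun U hU => ?_, fun x => limV_subset F C x (hRD x), fun x s hs B hB => ?_⟩
  · have := (hRm Uᶜ hU.isClosed_compl).compl
    simpa using this
  · obtain ⟨Q, hQ1, hQ2⟩ := exists_mix R hRm (R x) s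
    have : pshift s (R x) = Q := by
      apply Subtype.ext
      have i1 : IsFiniteMeasure (pshift s (R x) : Measure (IPath X)) := inferInstance
      have i2 : IsFiniteMeasure (Q : Measure (IPath X)) := inferInstance
      refine @ext_of_forall_integral_eq_of_IsFiniteMeasure _ _ _ _ _ _ _ i1 i2 fun f => ?_
      have h1 := KP1_const hD (d1 x (R x) (hRD x) s hs) f (by
        intro y A hA A' hA'
        rw [hR y] at hA hA'
        rw [mem_singleton_iff.1 hA, mem_singleton_iff.1 hA'])
      have h2 := hQ2 f
      have h3 : ∀ y, hSupp (limV F C) y f = intBCF f (R y) := by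
        intro y
        simp [hSupp, hR y]
      simp only [h3] at h1
      exact h1.trans h2.symm
    rw [this]
    exact hQ1 B hB
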